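/- Let d and m be positive natural numbers, let A be an m × d matrix with integer entries, and let S = {v : Fin d → ℕ | A.mulVec (fun j => (v j : ℤ)) = 0} be the set of nonnegative integer solutions of the homogeneous system (the 'matching equations'). Let c : Fin d → ℕ (the 'boundary edge degree' of each disc type) and e : Fin d → ℤ (the 'Euler characteristic contribution' of each disc type), and for v ∈ S write c(v) = Σⱼ c(j)·v(j) and e(v) = Σⱼ e(j)·(v(j) : ℤ). Suppose that every nonzero v ∈ S with c(v) = 0 satisfies e(v) ≤ −1. Then for all natural numbers n and b, the set {v ∈ S | c(v) ≤ b and e(v) ≥ −n} is finite. -/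

import Mathlib

/-- The set of nonnegative integer solutions of the homogeneous system of
'matching equations' given by the integer matrix `A`. -/
def matchingSolutions {d m : ℕ} (A : Matrix (Fin m) (Fin d) ℤ) :
    Set (Fin d → ℕ) :=
  {v : Fin d → ℕ | A.mulVec (fun j => (v j : ℤ)) = 0}

/-- Combinatorial core of Theorem 4: if every nonzero solution of the matching
equations with zero boundary edge degree has Euler characteristic at most `-1`,
then for any bounds `n`, `b` there are only finitely many solutions with
boundary edge degree at most `b` and Euler characteristic at least `-n`. -/
theorem finitely_many_bounded_solutions (d m : ℕ) (hd : 0 < d) (hm : 0 < m)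
    (A : Matrix (Fin m) (Fin d) ℤ) (c : Fin d → ℕ) (e : Fin d → ℤ)
    (h : ∀ v ∈ matchingSolutions A, v ≠ 0 → (∑ j, c j * v j) = 0 →
      (∑ j, e j * (v j : ℤ)) ≤ -1) :
    ∀ n b : ℕ,
      {v : Fin d → ℕ | v ∈ matchingSolutions A ∧ (∑ j, c j * v j) ≤ b ∧
        -(n : ℤ) ≤ ∑ j, e j * (v j : ℤ)}.Finite := by
  intro n b
  by_contra hinf
  obtain ⟨f, hinj, key⟩ : ∃ f : ℕ → (Fin d → ℕ), Function.Injective f ∧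
      ∀ k, f k ∈ matchingSolutions A ∧ (∑ j, c j * f k j) ≤ b ∧
        -(n : ℤ) ≤ ∑ j, e j * (f k j : ℤ) :=
    ⟨fun k => (Set.Infinite.natEmbedding _ hinf k : Fin d → ℕ),
      Subtype.val_injective.comp (Set.Infinite.natEmbedding _ hinf).injective,
      fun k => (Set.Infinite.natEmbedding _ hinf k).2⟩
  obtain ⟨p, q, hpq, hle⟩ := wellQuasiOrdered_le (α := (Fin d → ℕ) × ℕ × ℕ)
    (fun k => (f k, b - ∑ j, c j * f k j, (n + ∑ j, e j * (f k j : ℤ)).toNat))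
  obtain ⟨h1, h2, h3⟩ := hle
  dsimp only at h1 h2 h3
  obtain ⟨kp1, kp2, kp3⟩ := key p
  obtain ⟨kq1, kq2, kq3⟩ := key q
  obtain ⟨w, hw⟩ : ∃ w, f q = f p + w := ⟨f q - f p, (add_tsub_cancel_of_le h1).symm⟩
  have hw0 : w ≠ 0 := by
    rintro rfl
    exact hpq.ne (hinj (by simpa using hw.symm))
  have hc : ∑ j, c j * f q j = ∑ j, c j * f p j + ∑ j, c j * w j := by
    simp [hw, mul_add, Finset.sum_add_distrib]
  have he : ∑ j, e j * (f q j : ℤ) = ∑ j, e j * (f p j : ℤ) + ∑ j, e j * (w j : ℤ) := by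
    simp [hw, mul_add, Finset.sum_add_distrib]
  have hwS : w ∈ matchingSolutions A := by
    simp only [matchingSolutions, Set.mem_setOf_eq] at *
    have : (fun j => (f q j : ℤ)) = (fun j => (f p j : ℤ)) + fun j => (w j : ℤ) := by
      ext j; simp [hw]
    rw [this, Matrix.mulVec_add, kp1, zero_add] at kq1
    exact kq1
  have := h w hwS hw0 (by omega)
  omega
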